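/- Let X be a complex Hilbert space, let T ∈ B(X) be a contraction (‖T‖ ≤ 1), let Λ := σ(T) ∩ 𝕋, and let a ∈ ℓ¹(ℕ). Suppose there is a constant α ≥ 1 such that for every c ∈ ℓ¹(ℤ) one has inf{ ‖c − b‖_{ℓ¹(ℤ)} : b ∈ K_Λ } ≤ α · sup{ |ĉ(λ)| : λ ∈ Λ } (i.e. Λ is a Helson set with Helson constant at most α). Then sup{ |â(λ)| : λ ∈ Λ } ≤ limsup_{n→∞} ‖Tⁿ â(T)‖ ≤ liminf/limsup agree and, moreover, limsup_{n→∞} ‖Tⁿ â(T)‖ ≤ α · sup{ |â(λ)| : λ ∈ Λ }; in particular sup_{λ∈Λ}|â(λ)| ≤ ‖Tⁿ â(T)‖ for every n, and limsup_n ‖Tⁿ â(T)‖ ≤ α·sup_{λ∈Λ}|â(λ)|. (ℤ₊-instance of Corollary 4.3 of the paper.) -/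

import Mathlib

open Filter Topology

section vN
variable {X : Type*} [NormedAddCommGroup X] [InnerProductSpace ℂ X] [CompleteSpace X]

lemma unitary_poly_bound (U : X ≃ₗᵢ[ℂ] X) (p : Polynomial ℂ) (M : ℝ) (hM0 : 0 ≤ M)
    (hM : ∀ z : ℂ, ‖z‖ = 1 → ‖p.eval z‖ ≤ M) :
    ‖Polynomial.aeval (U : X →L[ℂ] X) p‖ ≤ M := by
  have hu : (U : X →L[ℂ] X) ∈ unitary (X →L[ℂ] X) := by
    have := (Unitary.linearIsometryEquiv.symm U).2
    exact this
  have hn : IsStarNormal (U : X →L[ℂ] X) := by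
    rw [Unitary.mem_iff] at hu
    exact ⟨by rw [commute_iff_eq, hu.1, hu.2]⟩
  rw [← cfc_polynomial p (U : X →L[ℂ] X) hn]
  refine norm_cfc_le hM0 fun x hx => hM x ?_
  have := spectrum.subset_circle_of_unitary hu hx
  simpa using this

lemma exists_defect (T : X →L[ℂ] X) (hT : ‖T‖ ≤ 1) :
    ∃ D : X →L[ℂ] X, ∀ x, ‖D x‖ ^ 2 = ‖x‖ ^ 2 - ‖T x‖ ^ 2 := by
  have h0 : 0 ≤ 1 - star T * T := by
    rw [sub_nonneg]
    refine (CStarAlgebra.star_mul_le_algebraMap_norm_sq).trans ?_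
    rw [← map_one (algebraMap ℝ (X →L[ℂ] X))]
    apply algebraMap_mono
    exact pow_le_one₀ (norm_nonneg _) hT
  obtain ⟨D, hD⟩ := CStarAlgebra.nonneg_iff_eq_star_mul_self.mp h0
  refine ⟨D, fun x => ?_⟩
  have h1 := congrArg (fun S : X →L[ℂ] X => inner ℂ (S x) x) hD
  simp only [ContinuousLinearMap.star_eq_adjoint, sub_apply,
    mul_apply_eq_comp, one_apply_eq_self, inner_sub_left,
    ContinuousLinearMap.adjoint_inner_left, inner_self_eq_norm_sq_to_K] at h1
  exact_mod_cast h1.symm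

lemma vN_finite (T : X →L[ℂ] X) (hT : ‖T‖ ≤ 1) (p : Polynomial ℂ) (M : ℝ) (hM0 : 0 ≤ M)
    (hM : ∀ z : ℂ, ‖z‖ = 1 → ‖p.eval z‖ ≤ M) (x : X) (K : ℕ) :
    ‖Polynomial.aeval T p x‖ ^ 2 - ‖(T ^ K) (Polynomial.aeval T p x)‖ ^ 2 ≤ M ^ 2 * ‖x‖ ^ 2 := by
  obtain ⟨D, hD⟩ := exists_defect T hT
  set d := p.natDegree with hd
  set L := K + d with hL
  let U : (PiLp 2 fun _ : Fin (L + 1) => X) ≃ₗᵢ[ℂ] (PiLp 2 fun _ : Fin (L + 1) => X) :=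
    LinearIsometryEquiv.piLpCongrLeft 2 ℂ X (Equiv.subRight (1 : Fin (L + 1)))
  set B : (PiLp 2 fun _ : Fin (L + 1) => X) →L[ℂ] (PiLp 2 fun _ : Fin (L + 1) => X) :=
    U.toContinuousLinearEquiv.toContinuousLinearMap with hB
  have hU : ∀ v i, B v i = v (i + 1) := by
    intro v i
    simp [hB, U, LinearIsometryEquiv.piLpCongrLeft_apply]
  have hUk : ∀ (k : ℕ) v i, (B ^ k) v i = v ⟨(i + k) % (L + 1), Nat.mod_lt _ (Nat.succ_pos L)⟩ := by
    intro k
    induction k with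
    | zero =>
      intro v i
      have : (⟨(i + 0) % (L + 1), Nat.mod_lt _ (Nat.succ_pos L)⟩ : Fin (L + 1)) = i := by
        ext; simp [Nat.mod_eq_of_lt i.2]
      rw [this]; simp
    | succ k ih =>
      intro v i
      rw [pow_succ, mul_apply_eq_comp, ih, hU]
      refine congrArg v.ofLp ?_
      ext
      simp [Fin.val_add, add_assoc]
  have htel : ∀ (y : X) (m : ℕ), ∑ i ∈ Finset.range m, ‖D ((T ^ i) y)‖ ^ 2
      = ‖y‖ ^ 2 - ‖(T ^ m) y‖ ^ 2 := by
    intro y m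
    induction m with
    | zero => simp
    | succ m ih =>
      rw [Finset.sum_range_succ, ih, hD, pow_succ' T m, mul_apply_eq_comp]
      ring
  let J : PiLp 2 fun _ : Fin (L + 1) => X := WithLp.toLp 2 fun i => D ((T ^ (i : ℕ)) x)
  have hJ : ‖J‖ ^ 2 ≤ ‖x‖ ^ 2 := by
    rw [PiLp.norm_sq_eq_of_L2]
    have : ∑ i : Fin (L + 1), ‖J i‖ ^ 2 = ∑ i ∈ Finset.range (L + 1), ‖D ((T ^ i) x)‖ ^ 2 := by
      rw [Finset.sum_range]
    rw [this, htel]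
    nlinarith [sq_nonneg ‖(T ^ (L + 1)) x‖]
  have hpB : ‖Polynomial.aeval B p J‖ ^ 2 ≤ M ^ 2 * ‖x‖ ^ 2 := by
    have h1 := (Polynomial.aeval B p).le_of_opNorm_le (unitary_poly_bound U p M hM0 hM) J
    calc _ ≤ (M * ‖J‖) ^ 2 := by gcongr
      _ = M ^ 2 * ‖J‖ ^ 2 := by ring
      _ ≤ _ := by gcongr
  have hent : ∀ i : Fin (L + 1), (i : ℕ) < K →
      Polynomial.aeval B p J i = D ((T ^ (i : ℕ)) (Polynomial.aeval T p x)) := by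
    intro i hi
    rw [Polynomial.aeval_eq_sum_range, Polynomial.aeval_eq_sum_range]
    simp only [sum_apply, smul_apply, map_sum, map_smul,
      WithLp.ofLp_sum, Finset.sum_apply, PiLp.smul_apply]
    refine Finset.sum_congr rfl fun k hk => ?_
    rw [hUk]
    have hk' : k ≤ d := by simpa [Nat.lt_succ_iff] using hk
    have : (i + k) % (L + 1) = i + k := Nat.mod_eq_of_lt (by omega)
    simp only [J, this, pow_add, mul_apply_eq_comp]
  rw [← htel]
  refine le_trans ?_ hpB
  rw [PiLp.norm_sq_eq_of_L2]
  have : ∑ i : Fin (L + 1), ‖Polynomial.aeval B p J i‖ ^ 2 = ∑ i ∈ Finset.range (L + 1),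
      if h : i < L + 1 then ‖Polynomial.aeval B p J ⟨i, h⟩‖ ^ 2 else 0 := by
    rw [Finset.sum_range]
    exact Finset.sum_congr rfl fun i _ => by rw [dif_pos i.2]
  rw [this]
  calc _ = ∑ i ∈ Finset.range K, if h : i < L + 1 then
            ‖Polynomial.aeval B p J ⟨i, h⟩‖ ^ 2 else 0 := by
        refine Finset.sum_congr rfl fun i hi => ?_
        have hi' := Finset.mem_range.mp hi
        rw [dif_pos (by omega), hent _ hi']
    _ ≤ _ := by
        refine Finset.sum_le_sum_of_subset_of_nonneg ?_ ?_
        · intro i; simp only [Finset.mem_range]; omega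
        · intro i _ _; split_ifs <;> positivity

lemma vN_strict (T : X →L[ℂ] X) (hT : ‖T‖ < 1) (p : Polynomial ℂ) (M : ℝ) (hM0 : 0 ≤ M)
    (hM : ∀ z : ℂ, ‖z‖ = 1 → ‖p.eval z‖ ≤ M) : ‖Polynomial.aeval T p‖ ≤ M := by
  refine ContinuousLinearMap.opNorm_le_bound _ hM0 fun x => ?_
  have h1 : Tendsto (fun K : ℕ => ‖Polynomial.aeval T p x‖ ^ 2
      - ‖(T ^ K) (Polynomial.aeval T p x)‖ ^ 2) atTop (𝓝 (‖Polynomial.aeval T p x‖ ^ 2 - 0)) := by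
    refine tendsto_const_nhds.sub ?_
    have h2 : Tendsto (fun K : ℕ => T ^ K) atTop (𝓝 0) := tendsto_pow_atTop_nhds_zero_of_norm_lt_one hT
    have h3 := ((ContinuousLinearMap.apply ℂ X (Polynomial.aeval T p x)).continuous.tendsto 0).comp h2
    have h4 := (h3.norm).pow 2
    simpa [Function.comp_def] using h4
  have h5 := le_of_tendsto' h1 (vN_finite T hT.le p M hM0 hM x)
  rw [sub_zero, ← mul_pow] at h5
  exact (pow_le_pow_iff_left₀ (norm_nonneg _) (by positivity) two_ne_zero).mp h5

/-- von Neumann's inequality. -/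
lemma vN (T : X →L[ℂ] X) (hT : ‖T‖ ≤ 1) (p : Polynomial ℂ) (M : ℝ) (hM0 : 0 ≤ M)
    (hM : ∀ z : ℂ, ‖z‖ = 1 → ‖p.eval z‖ ≤ M) : ‖Polynomial.aeval T p‖ ≤ M := by
  have hc : Continuous fun r : ℝ => ‖Polynomial.aeval ((r : ℂ) • T) p‖ :=
    ((Polynomial.continuous_aeval p).comp (Complex.continuous_ofReal.smul continuous_const)).norm
  have h1 : Tendsto (fun r : ℝ => ‖Polynomial.aeval ((r : ℂ) • T) p‖) (𝓝[<] 1)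
      (𝓝 ‖Polynomial.aeval T p‖) := by
    have := (hc.tendsto 1).mono_left (nhdsWithin_le_nhds (s := Set.Iio 1))
    simpa using this
  refine le_of_tendsto h1 ?_
  have : Set.Ioo (0 : ℝ) 1 ∈ 𝓝[<] (1 : ℝ) := Ioo_mem_nhdsLT one_pos
  filter_upwards [this] with r hr
  refine vN_strict _ ?_ p M hM0 hM
  rw [norm_smul, Complex.norm_real, Real.norm_of_nonneg hr.1.le]
  nlinarith [hr.1, hr.2, norm_nonneg T]
end vN

section core
local notation "𝔸" => AddCircle (1 : ℝ)

lemma four_norm (x : 𝔸) : ‖(fourier 1 x : ℂ)‖ = 1 := by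
  rw [fourier_one]; exact Circle.norm_coe _

lemma four_surj (z : ℂ) (hz : ‖z‖ = 1) : ∃ x : 𝔸, (fourier 1 x : ℂ) = z := by
  obtain ⟨x, hx⟩ := (AddCircle.homeomorphCircle (T := (1 : ℝ)) one_ne_zero).surjective
    ⟨z, by simpa [Submonoid.unitSphere] using hz⟩
  refine ⟨x, ?_⟩
  rw [fourier_one]
  have := congrArg (Subtype.val) hx
  simpa [AddCircle.homeomorphCircle_apply] using this

lemma four_zpow (n : ℤ) (x : 𝔸) : (fourier n x : ℂ) = (fourier 1 x : ℂ) ^ n := by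
  rw [fourier_apply, fourier_one, AddCircle.toCircle_zsmul, Circle.coe_zpow]

/-- Laurent polynomials on the circle. -/
def laurentSub : Submodule ℂ C(𝔸, ℂ) where
  carrier := {h | ∃ (N : ℕ) (q : Polynomial ℂ), ∀ x, (fourier 1 x : ℂ) ^ N * h x = q.eval (fourier 1 x)}
  zero_mem' := ⟨0, 0, by simp⟩
  add_mem' := by
    rintro f g ⟨N, q, h⟩ ⟨N', q', h'⟩
    refine ⟨N + N', Polynomial.X ^ N' * q + Polynomial.X ^ N * q', fun x => ?_⟩
    simp only [Polynomial.eval_add, Polynomial.eval_mul, Polynomial.eval_pow, Polynomial.eval_X,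
      ← h, ← h', ContinuousMap.add_apply]
    ring
  smul_mem' := by
    rintro c f ⟨N, q, h⟩
    refine ⟨N, Polynomial.C c * q, fun x => ?_⟩
    simp only [Polynomial.eval_mul, Polynomial.eval_C, ← h, ContinuousMap.smul_apply, smul_eq_mul]
    ring

lemma laurent_approx (h : C(𝔸, ℂ)) (ε : ℝ) (hε : 0 < ε) :
    ∃ (N : ℕ) (q : Polynomial ℂ), ∀ x : 𝔸,
      ‖(fourier 1 x : ℂ) ^ N * h x - q.eval (fourier 1 x)‖ ≤ ε := by
  have hle : Submodule.span ℂ (Set.range (@fourier (1 : ℝ))) ≤ laurentSub := by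
    rw [Submodule.span_le]
    rintro _ ⟨n, rfl⟩
    refine ⟨n.natAbs, Polynomial.X ^ (n.natAbs + n).toNat, fun x => ?_⟩
    have h0 : (fourier 1 x : ℂ) ≠ 0 := by
      rw [← norm_ne_zero_iff, four_norm]; exact one_ne_zero
    rw [four_zpow n x, Polynomial.eval_pow, Polynomial.eval_X, ← zpow_natCast, ← zpow_natCast,
      ← zpow_add₀ h0, Int.toNat_of_nonneg (by omega)]
  have hm : h ∈ (Submodule.span ℂ (Set.range (@fourier (1 : ℝ)))).topologicalClosure := by
    rw [span_fourier_closure_eq_top]; trivial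
  obtain ⟨g, hg, hd⟩ := Metric.mem_closure_iff.mp hm ε hε
  obtain ⟨N, q, hq⟩ := hle hg
  refine ⟨N, q, fun x => ?_⟩
  rw [← hq, ← mul_sub, norm_mul, norm_pow, four_norm, one_pow, one_mul, ← dist_eq_norm]
  exact (ContinuousMap.dist_apply_le_dist x).trans hd.le

variable {X : Type*} [NormedAddCommGroup X] [InnerProductSpace ℂ X] [CompleteSpace X]

lemma vN' (T : X →L[ℂ] X) (hT : ‖T‖ ≤ 1) (p : Polynomial ℂ) (M : ℝ)
    (hM : ∀ x : 𝔸, ‖p.eval (fourier 1 x : ℂ)‖ ≤ M) : ‖Polynomial.aeval T p‖ ≤ M := by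
  refine vN T hT p M ((norm_nonneg _).trans (hM 0)) fun z hz => ?_
  obtain ⟨x, rfl⟩ := four_surj z hz
  exact hM x

/-- The predicate that `h` is asymptotically annihilated. -/
def NegFn (T : X →L[ℂ] X) (h : C(𝔸, ℂ)) : Prop :=
  ∀ ε : ℝ, 0 < ε → ∃ (N : ℕ) (q : Polynomial ℂ) (m : ℕ),
    (∀ x : 𝔸, ‖(fourier 1 x : ℂ) ^ N * h x - q.eval (fourier 1 x)‖ ≤ ε) ∧
    ‖T ^ m * Polynomial.aeval T q‖ ≤ ε

lemma pow_norm_le (T : X →L[ℂ] X) (hT : ‖T‖ ≤ 1) (n : ℕ) (S : X →L[ℂ] X) :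
    ‖T ^ n * S‖ ≤ ‖S‖ := by
  induction n with
  | zero => simp
  | succ n ih =>
    rw [pow_succ', mul_assoc]
    refine (norm_mul_le _ _).trans ?_
    nlinarith [norm_nonneg (T ^ n * S), norm_nonneg T]

lemma pow_norm_mono (T : X →L[ℂ] X) (hT : ‖T‖ ≤ 1) {m n : ℕ} (h : m ≤ n) (S : X →L[ℂ] X) :
    ‖T ^ n * S‖ ≤ ‖T ^ m * S‖ := by
  obtain ⟨k, rfl⟩ := Nat.exists_eq_add_of_le h
  rw [add_comm, pow_add, mul_assoc]
  exact pow_norm_le T hT k _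

/-- The ideal of asymptotically annihilated functions. -/
def negIdeal (T : X →L[ℂ] X) (hT : ‖T‖ ≤ 1) : Ideal C(𝔸, ℂ) where
  carrier := {h | NegFn T h}
  zero_mem' := fun ε hε => ⟨0, 0, 0, by simp [hε.le], by simp [hε.le]⟩
  add_mem' := by
    intro f g hf hg ε hε
    obtain ⟨N, q, m, h1, h2⟩ := hf (ε / 2) (by positivity)
    obtain ⟨N', q', m', h1', h2'⟩ := hg (ε / 2) (by positivity)
    refine ⟨N + N', Polynomial.X ^ N' * q + Polynomial.X ^ N * q', m + m', fun x => ?_, ?_⟩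
    · have e : (fourier 1 x : ℂ) ^ (N + N') * (f + g) x -
          (Polynomial.X ^ N' * q + Polynomial.X ^ N * q').eval (fourier 1 x) =
          (fourier 1 x : ℂ) ^ N' * ((fourier 1 x : ℂ) ^ N * f x - q.eval (fourier 1 x)) +
          (fourier 1 x : ℂ) ^ N * ((fourier 1 x : ℂ) ^ N' * g x - q'.eval (fourier 1 x)) := by
        simp only [Polynomial.eval_add, Polynomial.eval_mul, Polynomial.eval_pow,
          Polynomial.eval_X, ContinuousMap.add_apply]
        ring
      rw [e]
      refine (norm_add_le _ _).trans ?_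
      rw [norm_mul, norm_mul, norm_pow, norm_pow, four_norm, one_pow, one_pow]
      linarith [h1 x, h1' x]
    · have e : T ^ (m + m') * Polynomial.aeval T (Polynomial.X ^ N' * q + Polynomial.X ^ N * q') =
          T ^ (m' + N') * (T ^ m * Polynomial.aeval T q) +
          T ^ (m + N) * (T ^ m' * Polynomial.aeval T q') := by
        simp only [map_add, map_mul, map_pow, Polynomial.aeval_X, mul_add, ← mul_assoc, ← pow_add]
        congr 3 <;> ring
      rw [e]
      refine (norm_add_le _ _).trans ?_
      linarith [pow_norm_le T hT (m' + N') (T ^ m * Polynomial.aeval T q),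
        pow_norm_le T hT (m + N) (T ^ m' * Polynomial.aeval T q')]
  smul_mem' := by
    intro c h hh ε hε
    obtain ⟨N', q', hc⟩ := laurent_approx c (ε / (2 * (‖h‖ + 1))) (by positivity)
    set η := ε / (2 * (‖h‖ + 1)) with hη
    have hη0 : 0 < η := by positivity
    set C := ‖c‖ + η + ‖Polynomial.aeval T q'‖ with hC
    have hC0 : 0 < C := by positivity
    obtain ⟨N, q, m, h1, h2⟩ := hh (ε / (2 * C)) (by positivity)
    have hC1 : C * (ε / (2 * C)) = ε / 2 := by field_simp
    have hη1 : η * ‖h‖ ≤ ε / 2 := by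
      have : η * (‖h‖ + 1) = ε / 2 := by rw [hη]; field_simp
      nlinarith
    set ε' := ε / (2 * C) with hε'
    have hε'0 : 0 < ε' := by positivity
    refine ⟨N + N', q' * q, m, fun x => ?_, ?_⟩
    · have e : (fourier 1 x : ℂ) ^ (N + N') * (c • h) x - (q' * q).eval (fourier 1 x) =
          ((fourier 1 x : ℂ) ^ N' * c x - q'.eval (fourier 1 x)) * ((fourier 1 x : ℂ) ^ N * h x) +
          q'.eval (fourier 1 x) * ((fourier 1 x : ℂ) ^ N * h x - q.eval (fourier 1 x)) := by
        simp only [Polynomial.eval_mul, smul_eq_mul, ContinuousMap.mul_apply]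
        ring
      rw [e]
      have hq' : ‖q'.eval (fourier 1 x : ℂ)‖ ≤ ‖c‖ + η := by
        have : q'.eval (fourier 1 x : ℂ) = (fourier 1 x : ℂ) ^ N' * c x -
          ((fourier 1 x : ℂ) ^ N' * c x - q'.eval (fourier 1 x)) := by ring
        rw [this]
        refine (norm_sub_le _ _).trans ?_
        rw [norm_mul, norm_pow, four_norm, one_pow, one_mul]
        exact add_le_add (c.norm_coe_le_norm x) (hc x)
      have hq'' : ‖q'.eval (fourier 1 x : ℂ)‖ ≤ C := hq'.trans (by simp [hC])
      refine (norm_add_le _ _).trans ?_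
      refine (add_le_add (norm_mul_le _ _) (norm_mul_le _ _)).trans ?_
      have a1 : ‖(fourier 1 x : ℂ) ^ N * h x‖ ≤ ‖h‖ := by
        rw [norm_mul, norm_pow, four_norm, one_pow, one_mul]
        exact h.norm_coe_le_norm x
      have a2 := mul_le_mul (hc x) a1 (norm_nonneg _) hη0.le
      have a3 := mul_le_mul hq'' (h1 x) (norm_nonneg _) hC0.le
      linarith
    · have e : T ^ m * Polynomial.aeval T (q' * q) =
          Polynomial.aeval T q' * (T ^ m * Polynomial.aeval T q) := by
        have : T ^ m = Polynomial.aeval T (Polynomial.X ^ m : Polynomial ℂ) := by simp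
        rw [this, ← map_mul, ← map_mul, ← map_mul]
        congr 1; ring
      rw [e]
      refine (norm_mul_le _ _).trans ?_
      have : ‖Polynomial.aeval T q'‖ ≤ C := by
        have := norm_nonneg c
        rw [hC]; linarith
      have a3 := mul_le_mul this h2 (norm_nonneg _) hC0.le
      linarith

lemma negIdeal_closed (T : X →L[ℂ] X) (hT : ‖T‖ ≤ 1) :
    IsClosed (negIdeal T hT : Set C(𝔸, ℂ)) := by
  rw [← closure_subset_iff_isClosed]
  intro h hh ε hε
  obtain ⟨g, hg, hd⟩ := Metric.mem_closure_iff.mp hh (ε / 2) (by positivity)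
  obtain ⟨N, q, m, h1, h2⟩ := hg (ε / 2) (by positivity)
  refine ⟨N, q, m, fun x => ?_, by linarith⟩
  have e : (fourier 1 x : ℂ) ^ N * h x - q.eval (fourier 1 x) =
      (fourier 1 x : ℂ) ^ N * (h x - g x) +
      ((fourier 1 x : ℂ) ^ N * g x - q.eval (fourier 1 x)) := by ring
  rw [e]
  refine (norm_add_le _ _).trans ?_
  rw [norm_mul, norm_pow, four_norm, one_pow, one_mul, ← dist_eq_norm]
  linarith [h1 x, (ContinuousMap.dist_apply_le_dist (f := h) (g := g) x)]

lemma peak (T : X →L[ℂ] X) (hT : ‖T‖ ≤ 1) (x₀ : 𝔸) (hx : (fourier 1 x₀ : ℂ) ∉ spectrum ℂ T) :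
    ∃ h ∈ negIdeal T hT, h x₀ ≠ 0 := by
  set l : ℂ := fourier 1 x₀ with hl
  have hunit := spectrum.notMem_iff.mp hx
  obtain ⟨R, hR⟩ : ∃ R : X →L[ℂ] X, R * (T - algebraMap ℂ _ l) = 1 := by
    obtain ⟨u, hu⟩ := hunit
    refine ⟨-(↑u⁻¹), ?_⟩
    have : T - algebraMap ℂ (X →L[ℂ] X) l = -u := by rw [hu]; abel
    rw [this]; simp
  set δ : ℝ := 1 / (2 * (‖R‖ + 1)) with hδ
  have hδ0 : 0 < δ := by positivity
  have hRδ : ‖R‖ * δ ≤ 1 / 2 := by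
    have : (‖R‖ + 1) * δ = 1 / 2 := by rw [hδ]; field_simp
    nlinarith
  have hδ1 : δ ≤ 1 := by
    rw [hδ, div_le_one (by positivity)]
    linarith [norm_nonneg R]
  let h : C(𝔸, ℂ) := ⟨fun x => ((max 0 (δ - ‖(fourier 1 x : ℂ) - l‖) : ℝ) : ℂ), by fun_prop⟩
  have hh : ∀ x, ‖h x‖ = max 0 (δ - ‖(fourier 1 x : ℂ) - l‖) := fun x => by
    change ‖((max 0 (δ - ‖(fourier 1 x : ℂ) - l‖) : ℝ) : ℂ)‖ = _
    rw [Complex.norm_real, Real.norm_of_nonneg (le_max_left _ _)]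
  refine ⟨h, ?_, ?_⟩
  swap
  · rw [← norm_ne_zero_iff, hh, ← hl, sub_self, norm_zero, sub_zero, max_eq_right hδ0.le]
    exact hδ0.ne'
  intro ε hε
  obtain ⟨n, hn⟩ := exists_pow_lt_of_lt_one (half_pos hε) (show (1 / 2 : ℝ) < 1 by norm_num)
  set C := (‖R‖ * 2) ^ n with hC
  have hC0 : 0 ≤ C := by positivity
  obtain ⟨N, q, hq⟩ := laurent_approx h (ε / (2 * (C + 1))) (by positivity)
  set η := ε / (2 * (C + 1)) with hη
  have hη0 : 0 < η := by positivity
  have hηC : C * η ≤ ε / 2 := by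
    have : (C + 1) * η = ε / 2 := by rw [hη]; field_simp
    nlinarith
  have hηε : η ≤ ε := by
    have : (C + 1) * η = ε / 2 := by rw [hη]; field_simp
    nlinarith
  refine ⟨N, q, 0, fun x => (hq x).trans hηε, ?_⟩
  rw [pow_zero, one_mul]
  set P := Polynomial.aeval T ((Polynomial.X - Polynomial.C l) ^ n * q) with hP
  have hcomm : Commute R (T - algebraMap ℂ _ l) := by
    have hu : IsUnit (T - algebraMap ℂ (X →L[ℂ] X) l) := by
      rw [← neg_sub]; exact hunit.neg
    obtain ⟨u, hu⟩ := hu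
    rw [← hu] at hR ⊢
    have : R = ↑u⁻¹ := by rw [← mul_one R, ← u.mul_inv, ← mul_assoc, hR, one_mul]
    rw [this]
    exact (Commute.refl (u : X →L[ℂ] X)).units_inv_left
  have e : Polynomial.aeval T q = R ^ n * P := by
    rw [hP, map_mul, map_pow, map_sub, Polynomial.aeval_X, Polynomial.aeval_C, ← mul_assoc,
      ← hcomm.mul_pow, hR, one_pow, one_mul]
  have hPb : ‖P‖ ≤ δ ^ n + 2 ^ n * η := by
    refine vN' T hT _ _ fun x => ?_
    rw [Polynomial.eval_mul, Polynomial.eval_pow, Polynomial.eval_sub, Polynomial.eval_X,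
      Polynomial.eval_C, norm_mul, norm_pow]
    have a1 : ‖q.eval (fourier 1 x : ℂ)‖ ≤ ‖h x‖ + η := by
      have : q.eval (fourier 1 x : ℂ) = (fourier 1 x : ℂ) ^ N * h x -
          ((fourier 1 x : ℂ) ^ N * h x - q.eval (fourier 1 x)) := by ring
      rw [this]
      refine (norm_sub_le _ _).trans ?_
      rw [norm_mul, norm_pow, four_norm, one_pow, one_mul]
      exact add_le_add le_rfl (hq x)
    have a2 : ‖(fourier 1 x : ℂ) - l‖ ≤ 2 := by
      refine (norm_sub_le _ _).trans ?_
      rw [hl, four_norm, four_norm]; norm_num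
    have a3 : ‖(fourier 1 x : ℂ) - l‖ ^ n * ‖h x‖ ≤ δ ^ n := by
      rw [hh]
      rcases le_total ‖(fourier 1 x : ℂ) - l‖ δ with h1 | h1
      · rw [max_eq_right (by linarith)]
        have b1 : ‖(fourier 1 x : ℂ) - l‖ ^ n ≤ δ ^ n := by gcongr
        have b2 : δ - ‖(fourier 1 x : ℂ) - l‖ ≤ 1 := by
          linarith [norm_nonneg ((fourier 1 x : ℂ) - l)]
        have := mul_le_mul b1 b2 (by linarith) (by positivity)
        linarith
      · rw [max_eq_left (by linarith), mul_zero]; positivity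
    have a4 : ‖(fourier 1 x : ℂ) - l‖ ^ n ≤ 2 ^ n := by gcongr
    have a5 := mul_le_mul_of_nonneg_left a1 (pow_nonneg (norm_nonneg ((fourier 1 x : ℂ) - l)) n)
    have a6 := mul_le_mul_of_nonneg_right a4 hη0.le
    rw [mul_add] at a5
    linarith
  rw [e]
  have hRn : ‖R ^ n * P‖ ≤ ‖R‖ ^ n * ‖P‖ := by
    clear_value P
    clear hC hP e hPb
    induction n generalizing P with
    | zero => simp
    | succ k _ =>
      refine (norm_mul_le _ _).trans ?_
      gcongr
      exact norm_pow_le' _ (Nat.succ_pos k)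
  refine hRn.trans ?_
  have b1 : ‖R‖ ^ n * (δ ^ n + 2 ^ n * η) = (‖R‖ * δ) ^ n + C * η := by rw [hC]; ring
  have b2 : (‖R‖ * δ) ^ n ≤ (1 / 2) ^ n := by gcongr
  have b3 := mul_le_mul_of_nonneg_left hPb (pow_nonneg (norm_nonneg R) n)
  linarith

lemma core_poly (T : X →L[ℂ] X) (hT : ‖T‖ ≤ 1) (p : Polynomial ℂ) (M : ℝ) (hM : 0 < M)
    (hp : ∀ z ∈ spectrum ℂ T, ‖z‖ = 1 → ‖p.eval z‖ ≤ M) (ε : ℝ) (hε : 0 < ε) :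
    ∃ n₀ : ℕ, ∀ n ≥ n₀, ‖T ^ n * Polynomial.aeval T p‖ ≤ M + ε := by
  have hmax : ∀ x : 𝔸, ((max ‖p.eval (fourier 1 x : ℂ)‖ M : ℝ) : ℂ) ≠ 0 := fun x => by
    have : 0 < max ‖p.eval (fourier 1 x : ℂ)‖ M := lt_max_of_lt_right hM
    exact_mod_cast this.ne'
  let g : C(𝔸, ℂ) := ⟨fun x => p.eval (fourier 1 x : ℂ) *
    ((M : ℂ) / ((max ‖p.eval (fourier 1 x : ℂ)‖ M : ℝ) : ℂ)), by
      have : Continuous fun x : 𝔸 => p.eval (fourier 1 x : ℂ) := by fun_prop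
      refine this.mul (continuous_const.div ?_ hmax)
      fun_prop⟩
  let f : C(𝔸, ℂ) := ⟨fun x => p.eval (fourier 1 x : ℂ), by fun_prop⟩
  have hg : ∀ x, ‖g x‖ ≤ M := by
    intro x
    change ‖p.eval (fourier 1 x : ℂ) *
      ((M : ℂ) / ((max ‖p.eval (fourier 1 x : ℂ)‖ M : ℝ) : ℂ))‖ ≤ M
    have h0 : 0 < max ‖p.eval (fourier 1 x : ℂ)‖ M := lt_max_of_lt_right hM
    rw [norm_mul, norm_div, Complex.norm_real, Complex.norm_real, Real.norm_of_nonneg hM.le,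
      Real.norm_of_nonneg h0.le, mul_div_assoc', div_le_iff₀ h0, mul_comm]
    exact mul_le_mul_of_nonneg_left (le_max_left _ _) hM.le
  have hmem : f - g ∈ negIdeal T hT := by
    rw [← ContinuousMap.idealOfSet_ofIdeal_isClosed (negIdeal_closed T hT),
      ContinuousMap.mem_idealOfSet]
    intro x hx
    have hx' := ContinuousMap.notMem_setOfIdeal.mp hx
    have hs : (fourier 1 x : ℂ) ∈ spectrum ℂ T := by
      by_contra hs
      obtain ⟨h, h1, h2⟩ := peak T hT x hs
      exact h2 (hx' h1)
    have hb := hp _ hs (four_norm x)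
    change p.eval (fourier 1 x : ℂ) - p.eval (fourier 1 x : ℂ) *
      ((M : ℂ) / ((max ‖p.eval (fourier 1 x : ℂ)‖ M : ℝ) : ℂ)) = 0
    rw [max_eq_right hb, div_self (by exact_mod_cast hM.ne'), mul_one, sub_self]
  obtain ⟨N, q, m, h1, h2⟩ := hmem (ε / 2) (by positivity)
  have hb : ‖Polynomial.aeval T (Polynomial.X ^ N * p - q)‖ ≤ M + ε / 2 := by
    refine vN' T hT _ _ fun x => ?_
    have e : (Polynomial.X ^ N * p - q).eval (fourier 1 x : ℂ) =
        (fourier 1 x : ℂ) ^ N * g x +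
        ((fourier 1 x : ℂ) ^ N * (f - g) x - q.eval (fourier 1 x)) := by
      have : f x = p.eval (fourier 1 x : ℂ) := rfl
      simp only [Polynomial.eval_sub, Polynomial.eval_mul, Polynomial.eval_pow,
        Polynomial.eval_X, ContinuousMap.sub_apply, this]
      ring
    rw [e]
    refine (norm_add_le _ _).trans ?_
    rw [norm_mul, norm_pow, four_norm, one_pow, one_mul]
    exact add_le_add (hg x) (h1 x)
  refine ⟨m + N, fun n hn => (pow_norm_mono T hT hn _).trans ?_⟩
  have e : T ^ (m + N) * Polynomial.aeval T p =
      T ^ m * Polynomial.aeval T (Polynomial.X ^ N * p - q) + T ^ m * Polynomial.aeval T q := by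
    rw [← mul_add, ← map_add, sub_add_cancel, map_mul, map_pow, Polynomial.aeval_X, pow_add,
      mul_assoc]
  rw [e]
  refine (norm_add_le _ _).trans ?_
  linarith [pow_norm_le T hT m (Polynomial.aeval T (Polynomial.X ^ N * p - q))]
end core


section final

lemma tail_bound {E : Type*} [NormedAddCommGroup E] [CompleteSpace E] (a : ℕ → ℂ)
    (ha : Summable fun n : ℕ => ‖a n‖) (f : ℕ → E) (hf : ∀ m, ‖f m‖ ≤ ‖a m‖) (k : ℕ) :
    ‖(∑' m, f m) - ∑ m ∈ Finset.range k, f m‖ ≤ ∑' m, ‖a (m + k)‖ := by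
  have hs : Summable f := Summable.of_norm_bounded ha hf
  rw [← hs.sum_add_tsum_nat_add k, add_sub_cancel_left]
  exact tsum_of_norm_bounded ((summable_nat_add_iff k).mpr ha).hasSum fun m => hf (m + k)

/-- Partial sum polynomial. -/
noncomputable def partPoly (a : ℕ → ℂ) (k : ℕ) : Polynomial ℂ :=
  ∑ m ∈ Finset.range k, Polynomial.C (a m) * Polynomial.X ^ m

lemma partPoly_eval (a : ℕ → ℂ) (k : ℕ) (z : ℂ) :
    (partPoly a k).eval z = ∑ m ∈ Finset.range k, a m * z ^ m := by
  simp [partPoly, Polynomial.eval_finset_sum]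

variable {X : Type*} [NormedAddCommGroup X] [InnerProductSpace ℂ X] [CompleteSpace X]

lemma partPoly_aeval (a : ℕ → ℂ) (k : ℕ) (T : X →L[ℂ] X) :
    Polynomial.aeval T (partPoly a k) = ∑ m ∈ Finset.range k, a m • T ^ m := by
  simp [partPoly, Algebra.smul_def]

lemma term_bound (T : X →L[ℂ] X) (hT : ‖T‖ ≤ 1) (a : ℕ → ℂ) (m : ℕ) :
    ‖a m • T ^ m‖ ≤ ‖a m‖ := by
  have h1 : ‖T ^ m‖ ≤ 1 := by
    have := pow_norm_le T hT m 1
    rw [mul_one] at this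
    exact this.trans ContinuousLinearMap.norm_id_le
  rw [norm_smul]
  exact mul_le_of_le_one_right (norm_nonneg _) h1

lemma term_bound' (a : ℕ → ℂ) (z : ℂ) (hz : ‖z‖ = 1) (m : ℕ) : ‖a m * z ^ m‖ ≤ ‖a m‖ := by
  rw [norm_mul, norm_pow, hz, one_pow, mul_one]

lemma lower_bound (T : X →L[ℂ] X) (hT : ‖T‖ ≤ 1) (a : ℕ → ℂ) (ha : Summable fun n : ℕ => ‖a n‖)
    (z : ℂ) (hz : z ∈ spectrum ℂ T) (hz1 : ‖z‖ = 1) (n : ℕ) :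
    ‖∑' m : ℕ, a m * z ^ m‖ ≤ ‖T ^ n * (∑' m : ℕ, a m • T ^ m)‖ := by
  have hnt : Nontrivial X := by
    by_contra h
    rw [not_nontrivial_iff_subsingleton] at h
    have : Subsingleton (X →L[ℂ] X) := ⟨fun f g => by ext x; exact Subsingleton.elim _ _⟩
    rw [spectrum.of_subsingleton] at hz
    exact hz
  have hs : Summable fun m => a m • T ^ m := Summable.of_norm_bounded ha (term_bound T hT a)
  have hs' : Summable fun m => a m * z ^ m := Summable.of_norm_bounded ha (term_bound' a z hz1)
  have h1 := hs'.hasSum.tendsto_sum_nat.norm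
  have h2 := (hs.hasSum.tendsto_sum_nat.const_mul (T ^ n)).norm
  refine le_of_tendsto_of_tendsto' h1 h2 fun k => ?_
  have h3 := spectrum.subset_polynomial_aeval T (Polynomial.X ^ n * partPoly a k) ⟨z, hz, rfl⟩
  have h4 := spectrum.norm_le_norm_of_mem h3
  simpa [partPoly_eval, partPoly_aeval, hz1] using h4

end final

/-- ℤ₊-instance of Corollary 4.3: let `T` be a contraction on a complex Hilbert space,
`Λ := σ(T) ∩ 𝕋`, and suppose `Λ` is a Helson set with Helson constant at most `α`, i.e.
for every `c ∈ ℓ¹(ℤ)`, `dist(c, K_Λ) ≤ α·sup_{λ∈Λ}|ĉ(λ)|`. Then for every `a ∈ ℓ¹(ℕ)`,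
`sup_{λ∈Λ}|â(λ)| ≤ ‖Tⁿ â(T)‖` for every `n`, and
`limsup_n ‖Tⁿ â(T)‖ ≤ α·sup_{λ∈Λ}|â(λ)|`. -/
theorem stmt_13 {X : Type*} [NormedAddCommGroup X] [InnerProductSpace ℂ X] [CompleteSpace X]
    (T : X →L[ℂ] X) (hT : ‖T‖ ≤ 1)
    (a : ℕ → ℂ) (ha : Summable fun n : ℕ => ‖a n‖)
    (α : ℝ) (hα : 1 ≤ α)
    (hHelson : ∀ c : ℤ → ℂ, (Summable fun n : ℤ => ‖c n‖) →
      sInf { r : ℝ | ∃ b : ℤ → ℂ, (Summable fun n : ℤ => ‖b n‖) ∧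
          (∀ lam ∈ spectrum ℂ T, ‖lam‖ = 1 → (∑' n : ℤ, b n * lam ^ n) = 0) ∧
          r = ∑' n : ℤ, ‖c n - b n‖ } ≤
        α * sSup ((fun lam : ℂ => ‖∑' n : ℤ, c n * lam ^ n‖) ''
          { lam : ℂ | lam ∈ spectrum ℂ T ∧ ‖lam‖ = 1 })) :
    (∀ n : ℕ,
        sSup ((fun lam : ℂ => ‖∑' m : ℕ, a m * lam ^ m‖) ''
            { lam : ℂ | lam ∈ spectrum ℂ T ∧ ‖lam‖ = 1 }) ≤
          ‖T ^ n * (∑' m : ℕ, a m • T ^ m)‖) ∧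
      Filter.limsup (fun n : ℕ => ‖T ^ n * (∑' m : ℕ, a m • T ^ m)‖) atTop ≤
        α * sSup ((fun lam : ℂ => ‖∑' m : ℕ, a m * lam ^ m‖) ''
            { lam : ℂ | lam ∈ spectrum ℂ T ∧ ‖lam‖ = 1 }) := by
  have hbdd : BddAbove ((fun lam : ℂ => ‖∑' m : ℕ, a m * lam ^ m‖) ''
            { lam : ℂ | lam ∈ spectrum ℂ T ∧ ‖lam‖ = 1 }) := by
    refine ⟨∑' m, ‖a m‖, ?_⟩
    rintro _ ⟨z, ⟨_, hz1⟩, rfl⟩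
    exact tsum_of_norm_bounded ha.hasSum (term_bound' a z hz1)
  have hS0 : 0 ≤ sSup ((fun lam : ℂ => ‖∑' m : ℕ, a m * lam ^ m‖) ''
            { lam : ℂ | lam ∈ spectrum ℂ T ∧ ‖lam‖ = 1 }) := by
    refine Real.sSup_nonneg ?_
    rintro _ ⟨z, _, rfl⟩
    exact norm_nonneg _
  refine ⟨fun n => ?_, ?_⟩
  · refine Real.sSup_le ?_ (norm_nonneg _)
    rintro _ ⟨z, ⟨hz, hz1⟩, rfl⟩
    exact lower_bound T hT a ha z hz hz1 n
  · have hle : ∀ z ∈ spectrum ℂ T, ‖z‖ = 1 → ‖∑' m : ℕ, a m * z ^ m‖ ≤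
        sSup ((fun lam : ℂ => ‖∑' m : ℕ, a m * lam ^ m‖) ''
            { lam : ℂ | lam ∈ spectrum ℂ T ∧ ‖lam‖ = 1 }) :=
      fun z hz hz1 => le_csSup hbdd ⟨z, ⟨hz, hz1⟩, rfl⟩
    generalize sSup ((fun lam : ℂ => ‖∑' m : ℕ, a m * lam ^ m‖) ''
            { lam : ℂ | lam ∈ spectrum ℂ T ∧ ‖lam‖ = 1 }) = S at hS0 hle ⊢
    refine le_trans ?_ (le_mul_of_one_le_left hS0 hα)
    refine le_of_forall_pos_le_add fun ε hε => ?_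
    have htail := tendsto_sum_nat_add fun m => ‖a m‖
    obtain ⟨k, hk⟩ := (htail.eventually (gt_mem_nhds (show (0 : ℝ) < ε / 3 by positivity))).exists
    obtain ⟨n₀, hn₀⟩ := core_poly T hT (partPoly a k) (S + ε / 3) (by positivity) (by
      intro z hz hz1
      have h1 := tail_bound a ha _ (term_bound' a z hz1) k
      rw [← partPoly_eval] at h1
      have h2 := hle z hz hz1
      have h3 := norm_sub_norm_le ((partPoly a k).eval z) (∑' m : ℕ, a m * z ^ m)
      rw [norm_sub_rev] at h3
      linarith) (ε / 3) (by positivity)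
    refine Filter.limsup_le_of_le ?_ ?_
    · exact Filter.isCoboundedUnder_le_of_le _ (x := 0) fun n => norm_nonneg _
    · filter_upwards [eventually_ge_atTop n₀] with n hn
      have h1 := tail_bound a ha _ (term_bound T hT a) k
      rw [← partPoly_aeval] at h1
      have h2 := pow_norm_le T hT n ((∑' m : ℕ, a m • T ^ m) - Polynomial.aeval T (partPoly a k))
      have h3 := hn₀ n hn
      have h4 : T ^ n * (∑' m : ℕ, a m • T ^ m) =
        T ^ n * ((∑' m : ℕ, a m • T ^ m) - Polynomial.aeval T (partPoly a k)) +
        T ^ n * Polynomial.aeval T (partPoly a k) := by rw [← mul_add, sub_add_cancel]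
      rw [h4]
      refine (norm_add_le _ _).trans ?_
      linarith
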